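/- arXiv:2306.02721 — 6 statements merged into one kernel-verified Lean document; each statement's English description precedes it below -/
import Mathlib

section
/- For every positive integer t there exists a constant K(t) such that the following holds: for every finite group N, every group homomorphism φ : Z_2 → Aut(N), and every balanced subset S of (N ⋊_φ Z_2) \ {(0,0)} of size k ≥ K(t), the set S admits an alternating parity t-weak sequencing. -/
abbrev Z2 : Type := Multiplicative (ZMod 2)

/-- The partial-sums condition for a `t`-weak sequencing of the list `l`. -/
def WeakSeqList {G : Type*} [Group G] (t : ℕ) (l : List G) : Prop :=
  ∀ i j : ℕ, i < j → j ≤ l.length → j - i ≤ t →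
    (l.take i).prod ≠ (l.take j).prod

/-- `l` is an ordering of the finite set `S`. -/
def IsOrderingOf {G : Type*} [Group G] (l : List G) (S : Finset G) : Prop :=
  l.Nodup ∧ ∀ x, x ∈ l ↔ x ∈ S

/-- Consecutive elements of `l` alternate between even and odd. -/
def AltList {N : Type*} [Group N] {φ : Z2 →* MulAut N}
    (l : List (N ⋊[φ] Z2)) : Prop :=
  l.Chain' (fun a b => a.right ≠ b.right)

/-- Number of even elements of `S`. -/
def evenCount {N : Type*} [Group N] {φ : Z2 →* MulAut N}
    (S : Finset (N ⋊[φ] Z2)) : ℕ :=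
  (S.filter (fun g => g.right = 1)).card

/-- `S` has type `(a, b)`. -/
def HasType {N : Type*} [Group N] {φ : Z2 →* MulAut N}
    (S : Finset (N ⋊[φ] Z2)) (a b : ℕ) : Prop :=
  evenCount S = a ∧ S.card = a + b

/-!
Let elements be coloured by `ZMod r` and ask that the `i`-th entry have colour `i`. Extending a
sequence at its end fails for at most `t` values of the next entry, so the greedy procedure only
gets stuck when about `t` elements of each colour are left. To deal with these, reserve a long
initial segment. For each of its positions there are at most `t * t` elements that cannot replace
the entry standing there; place all these boundedly many exceptional elements right after the
segment, and only then continue greedily. Each element `x` left over can now be absorbed: exchange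
it for an entry `y` of its colour in the reserved segment, far from all earlier exchanges, and
append `y` instead of `x`. As at most `t` values of `y` are unsuitable for appending, a long segment
always offers a good one.
-/

section CyclicColoring

open Finset Function

variable {G : Type*} [Group G]

/-- The product `f a * f (a + 1) * ⋯ * f (b - 1)` of a segment of the sequence `f`, equal to `1`
when `b ≤ a`. It is the quotient of two partial products, so `t`-weak sequencings are the sequences
whose nonempty segments of length at most `t` have nontrivial product. -/
def segProd (f : ℕ → G) (a b : ℕ) : G := ((List.Ico a b).map f).prod

@[simp]
lemma segProd_self (f : ℕ → G) (a : ℕ) : segProd f a a = 1 := by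
  simp [segProd]

lemma segProd_mul_segProd (f : ℕ → G) {a b c : ℕ} (hab : a ≤ b) (hbc : b ≤ c) :
    segProd f a b * segProd f b c = segProd f a c := by
  rw [segProd, segProd, segProd, ← List.prod_append, ← List.map_append,
    List.Ico.append_consecutive hab hbc]

lemma segProd_succ (f : ℕ → G) {a b : ℕ} (hab : a ≤ b) :
    segProd f a (b + 1) = segProd f a b * f b := by
  simp [segProd, List.Ico.succ_top hab]

lemma segProd_congr {f g : ℕ → G} {a b : ℕ} (h : Set.EqOn f g (Set.Ico a b)) :
    segProd f a b = segProd g a b :=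
  congrArg List.prod (List.map_congr_left fun _ hi => h (List.Ico.mem.1 hi))

lemma segProd_update_of_notMem (f : ℕ → G) {a b j : ℕ} (x : G) (hj : j ∉ Set.Ico a b) :
    segProd (update f j x) a b = segProd f a b :=
  segProd_congr fun _ hi => update_of_ne (ne_of_mem_of_not_mem hi hj) _ _

lemma segProd_update_of_mem (f : ℕ → G) {a b j : ℕ} (x : G) (hj : j ∈ Set.Ico a b) :
    segProd (update f j x) a b = segProd f a j * x * segProd f (j + 1) b := by
  rw [← segProd_mul_segProd _ (hj.1.trans j.le_succ) hj.2, segProd_succ _ hj.1, update_self,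
    segProd_update_of_notMem _ _ (by simp), segProd_update_of_notMem _ _ (by simp)]

lemma prod_take_map_range (f : ℕ → G) {L i : ℕ} (hi : i ≤ L) :
    (((List.range L).map f).take i).prod = segProd f 0 i := by
  rw [← List.map_take, List.take_range, min_eq_left hi, segProd, List.Ico.zero_bot]

/-- `y` may be written at position `L` of `f` without creating a segment of length at most `t` that
ends there and has trivial product. -/
def IsAppendable (t : ℕ) (f : ℕ → G) (L : ℕ) (y : G) : Prop :=
  ∀ a ≤ L, L < a + t → segProd f a L * y ≠ 1

/-- `x` may replace the entry of `f` at position `j` without creating a segment of length at most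
`t` that passes through `j` and has trivial product. -/
def IsInsertable (t : ℕ) (f : ℕ → G) (j : ℕ) (x : G) : Prop :=
  ∀ a b, a ≤ j → j < b → b ≤ a + t → segProd f a j * x * segProd f (j + 1) b ≠ 1

lemma exists_card_le_isAppendable (t : ℕ) (f : ℕ → G) (L : ℕ) :
    ∃ F : Finset G, #F ≤ t ∧ ∀ y ∉ F, IsAppendable t f L y := by
  classical
  refine ⟨(range t).image fun n => (segProd f (L - n) L)⁻¹, card_image_le.trans_eq (card_range t),
    fun y hy a ha hat h => hy (mem_image.2 ⟨L - a, mem_range.2 (by omega), ?_⟩)⟩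
  rw [Nat.sub_sub_self ha, eq_inv_of_mul_eq_one_right h]

lemma exists_card_le_isInsertable (t : ℕ) (f : ℕ → G) (j : ℕ) :
    ∃ F : Finset G, #F ≤ t * t ∧ ∀ x ∉ F, IsInsertable t f j x := by
  classical
  refine ⟨(range t ×ˢ range t).image fun q =>
      (segProd f (j - q.1) j)⁻¹ * (segProd f (j + 1) (j + 1 + q.2))⁻¹,
    card_image_le.trans_eq (by simp), fun x hx a b ha hb hab h =>
      hx (mem_image.2 ⟨(j - a, b - (j + 1)),
        mem_product.2 ⟨mem_range.2 (by omega), mem_range.2 (by omega)⟩, ?_⟩)⟩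
  rw [Nat.sub_sub_self ha, Nat.add_sub_of_le hb, ← eq_inv_of_mul_eq_one_left h,
    inv_mul_cancel_left]

lemma IsAppendable.congr {t : ℕ} {f g : ℕ → G} {L : ℕ} {y : G} (h : IsAppendable t f L y)
    (hfg : ∀ i < L, L < i + t → f i = g i) : IsAppendable t g L y := by
  intro a ha hat
  rw [← segProd_congr fun i hi => hfg i hi.2 (by have := hi.1; omega)]
  exact h a ha hat

lemma IsInsertable.congr {t : ℕ} {f g : ℕ → G} {j : ℕ} {x : G} (h : IsInsertable t f j x)
    (hfg : ∀ i, i < j + t → j < i + t → f i = g i) : IsInsertable t g j x := by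
  intro a b ha hb hab
  have left : segProd f a j = segProd g a j :=
    segProd_congr fun i ⟨hi, hi'⟩ => hfg i (by omega) (by omega)
  have right : segProd f (j + 1) b = segProd g (j + 1) b :=
    segProd_congr fun i ⟨hi, hi'⟩ => hfg i (by omega) (by omega)
  rw [← left, ← right]
  exact h a b ha hb hab

lemma IsAppendable.update_succ {t : ℕ} {f : ℕ → G} {L : ℕ} {x y : G}
    (h : IsAppendable t f L (y * x)) (hx : x ≠ 1) : IsAppendable t (update f L y) (L + 1) x := by
  intro a ha hat
  rcases ha.eq_or_lt with rfl | ha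
  · simpa using hx
  · rw [segProd_update_of_mem f y ⟨Nat.le_of_lt_succ ha, L.lt_succ_self⟩, segProd_self, mul_one,
      mul_assoc]
    exact h a (Nat.le_of_lt_succ ha) (by omega)

lemma injOn_update {α β : Type*} [DecidableEq α] {f : α → β} {s : Set α} {j : α} {x : β}
    (hf : Set.InjOn f (s \ {j})) (hx : ∀ i ∈ s, i ≠ j → f i ≠ x) :
    Set.InjOn (update f j x) s := by
  intro a ha b hb hab
  by_cases haj : a = j <;> by_cases hbj : b = j
  · rw [haj, hbj]
  · subst haj
    rw [update_self, update_of_ne hbj] at hab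
    exact absurd hab.symm (hx b hb hbj)
  · subst hbj
    rw [update_self, update_of_ne haj] at hab
    exact absurd hab (hx a ha haj)
  · rw [update_of_ne haj, update_of_ne hbj] at hab
    exact hf ⟨ha, haj⟩ ⟨hb, hbj⟩ hab

lemma card_filter_range_natCast_eq (r : ℕ) [NeZero r] (b v : ℕ) :
    #{i ∈ range b | ((i : ℕ) : ZMod r) = v} = b / r + if v % r < b % r then 1 else 0 := by
  simp_rw [ZMod.natCast_eq_natCast_iff, ← Nat.count_eq_card_filter_range]
  exact Nat.count_modEq_card b (NeZero.pos r) v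

variable {r t : ℕ} {χ : G → ZMod r} {S : Finset G}

/-- The `r` colour classes of `S` have the same size. -/
def IsBalanced (χ : G → ZMod r) (S : Finset G) : Prop :=
  ∀ c, r * #{x ∈ S | χ x = c} = #S

/-- The first `L` entries of `f` are distinct elements of `S` whose colours run cyclically through
`ZMod r`, starting from `0`, and satisfy the condition of a `t`-weak sequencing. The entries of `f`
from position `L` on are irrelevant. -/
structure IsPartialSequencing (t : ℕ) (χ : G → ZMod r) (S : Finset G) (f : ℕ → G) (L : ℕ) :
    Prop where
  mem : ∀ i < L, f i ∈ S
  injOn : Set.InjOn f (Set.Iio L)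
  color : ∀ i < L, χ (f i) = i
  segProd_ne_one : ∀ a b, a < b → b ≤ L → b ≤ a + t → segProd f a b ≠ 1

namespace IsPartialSequencing

variable {f : ℕ → G} {L : ℕ}

lemma append (h : IsPartialSequencing t χ S f L) {y : G} (hyS : y ∈ S) (hχ : χ y = L)
    (hy : ∀ i < L, f i ≠ y) (hyL : IsAppendable t f L y) :
    IsPartialSequencing t χ S (update f L y) (L + 1) where
  mem i hi := by
    rcases Nat.lt_succ_iff_lt_or_eq.1 hi with hi | rfl
    · rw [update_of_ne hi.ne]
      exact h.mem i hi
    · rwa [update_self]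
  injOn := injOn_update
    (h.injOn.mono fun i hi => lt_of_le_of_ne (Nat.le_of_lt_succ hi.1) hi.2)
    fun i hi hiL => hy i (lt_of_le_of_ne (Nat.le_of_lt_succ hi) hiL)
  color i hi := by
    rcases Nat.lt_succ_iff_lt_or_eq.1 hi with hi | rfl
    · rw [update_of_ne hi.ne]
      exact h.color i hi
    · rwa [update_self]
  segProd_ne_one a b hab hb hbt := by
    rcases Nat.le_succ_iff.1 hb with hb | rfl
    · rw [segProd_update_of_notMem _ _ fun hL => hL.2.not_ge hb]
      exact h.segProd_ne_one a b hab hb hbt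
    · rw [segProd_update_of_mem _ _ ⟨Nat.le_of_lt_succ hab, L.lt_succ_self⟩, segProd_self, mul_one]
      exact hyL a (Nat.le_of_lt_succ hab) hbt

lemma replace (h : IsPartialSequencing t χ S f L) {j : ℕ} {x : G} (hxS : x ∈ S) (hχ : χ x = j)
    (hx : ∀ i < L, f i ≠ x) (hxj : IsInsertable t f j x) :
    IsPartialSequencing t χ S (update f j x) L where
  mem i hi := by
    rcases eq_or_ne i j with rfl | hij
    · rwa [update_self]
    · rw [update_of_ne hij]
      exact h.mem i hi
  injOn := injOn_update (h.injOn.mono Set.sdiff_subset) fun i hi _ => hx i hi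
  color i hi := by
    rcases eq_or_ne i j with rfl | hij
    · rwa [update_self]
    · rw [update_of_ne hij]
      exact h.color i hi
  segProd_ne_one a b hab hb hbt := by
    by_cases hj : j ∈ Set.Ico a b
    · rw [segProd_update_of_mem _ _ hj]
      exact hxj a b hj.1 hj.2 hbt
    · rw [segProd_update_of_notMem _ _ hj]
      exact h.segProd_ne_one a b hab hb hbt

lemma absorb (h : IsPartialSequencing t χ S f L) {j : ℕ} {x : G} (hxS : x ∈ S) (hχ : χ x = L)
    (hx : ∀ i < L, f i ≠ x) (hjL : j < L) (hjt : j + t ≤ L) (hj : (j : ZMod r) = L)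
    (hxj : IsInsertable t f j x) (hfj : IsAppendable t f L (f j)) :
    IsPartialSequencing t χ S (update (update f j x) L (f j)) (L + 1) := by
  refine (h.replace hxS (hχ.trans hj.symm) hx hxj).append (h.mem j hjL)
    ((h.color j hjL).trans hj) (fun i hi hij => ?_)
    (hfj.congr fun i _ hi => (update_of_ne (by omega) _ _).symm)
  rcases eq_or_ne i j with rfl | hne
  · rw [update_self] at hij
    exact hx i hjL hij.symm
  · rw [update_of_ne hne] at hij
    exact hne (h.injOn hi hjL hij)

lemma exists_unused [NeZero r] (h : IsPartialSequencing t χ S f L) (hS : IsBalanced χ S)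
    (X : Finset G) (hX : L + r * #X < #S) :
    ∃ y ∈ S, χ y = L ∧ y ∉ X ∧ ∀ i < L, f i ≠ y := by
  classical
  let I : Finset ℕ := {i ∈ range L | ((i : ℕ) : ZMod r) = L}
  have hI : #I = L / r := by
    simp only [I, card_filter_range_natCast_eq, lt_irrefl, if_false, add_zero]
  have hcard : #(I.image f ∪ X) < #{y ∈ S | χ y = L} := by
    refine lt_of_mul_lt_mul_left' (a := r) ?_
    calc r * #(I.image f ∪ X) ≤ r * (L / r + #X) := by
          grw [card_union_le, card_image_le, hI]
      _ ≤ L + r * #X := by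
          rw [mul_add]
          grw [Nat.mul_div_le]
      _ < #S := hX
      _ = r * #{y ∈ S | χ y = L} := (hS L).symm
  obtain ⟨y, hy, hyX⟩ := exists_mem_notMem_of_card_lt_card hcard
  obtain ⟨hyS, hχ⟩ := mem_filter.1 hy
  rw [mem_union, not_or] at hyX
  refine ⟨y, hyS, hχ, hyX.2, fun i hi hiy => hyX.1 (mem_image.2 ⟨i, ?_, hiy⟩)⟩
  exact mem_filter.2 ⟨mem_range.2 hi, by rw [← h.color i hi, hiy, hχ]⟩

lemma exists_append [NeZero r] (h : IsPartialSequencing t χ S f L) (hS : IsBalanced χ S)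
    (X : Finset G) (hX : L + r * (t + #X) < #S) :
    ∃ y ∉ X, IsPartialSequencing t χ S (update f L y) (L + 1) := by
  classical
  obtain ⟨F, hF, hFapp⟩ := exists_card_le_isAppendable t f L
  obtain ⟨y, hyS, hχ, hyX, hy⟩ := h.exists_unused hS (F ∪ X) <| by
    grw [card_union_le, hF]
    exact hX
  rw [mem_union, not_or] at hyX
  exact ⟨y, hyX.2, h.append hyS hχ hy (hFapp y hyX.1)⟩

lemma exists_extend [NeZero r] (h : IsPartialSequencing t χ S f L) (hS : IsBalanced χ S)
    (X : Finset G) (k : ℕ) (hX : L + k + r * (t + #X) ≤ #S) :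
    ∃ f', Set.EqOn f' f (Set.Iio L) ∧ IsPartialSequencing t χ S f' (L + k) ∧
      ∀ i ∈ Set.Ico L (L + k), f' i ∉ X := by
  induction k with
  | zero => exact ⟨f, Set.eqOn_refl f _, h, by simp⟩
  | succ k ih =>
    obtain ⟨f', heq, h', hf'⟩ := ih (by omega)
    obtain ⟨y, hy, h''⟩ := h'.exists_append hS X (by omega)
    refine ⟨_, fun i hi => ?_, h'', fun i hi => ?_⟩
    · rw [update_of_ne (Nat.lt_add_right k hi).ne, heq hi]
    · rcases eq_or_ne i (L + k) with rfl | hik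
      · rwa [update_self]
      · rw [update_of_ne hik]
        exact hf' i ⟨hi.1, lt_of_le_of_ne (Nat.le_of_lt_succ hi.2) hik⟩

/- Any nontrivial `x` can be appended one step later: the entry `y` in between is chosen such that
`y * x` avoids the few values not appendable at `L`. -/
lemma exists_append_append [NeZero r] (h : IsPartialSequencing t χ S f L) (hS : IsBalanced χ S)
    {x : G} (hxS : x ∈ S) (hx1 : x ≠ 1) (hχ : χ x = L + 1) (hx : ∀ i < L, f i ≠ x)
    (hL : L + r * (2 * t + 1) < #S) :
    ∃ y, IsPartialSequencing t χ S (update (update f L y) (L + 1) x) (L + 2) := by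
  classical
  obtain ⟨F, hF, hFapp⟩ := exists_card_le_isAppendable t f L
  obtain ⟨y, hyX, h'⟩ := h.exists_append hS (insert x (F.image (· * x⁻¹))) <| by
    grw [card_insert_le, card_image_le, hF]
    rwa [← add_assoc, ← two_mul]
  rw [mem_insert, not_or] at hyX
  have hyx : y * x ∉ F := fun hF => hyX.2 (mem_image.2 ⟨y * x, hF, mul_inv_cancel_right y x⟩)
  refine ⟨y, h'.append hxS (by rw [hχ, Nat.cast_succ]) (fun i hi => ?_)
    ((hFapp _ hyx).update_succ hx1)⟩
  rcases Nat.lt_succ_iff_lt_or_eq.1 hi with hi | rfl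
  · rw [update_of_ne hi.ne]
    exact hx i hi
  · rw [update_self]
    exact hyX.1

lemma exists_extend_mem [NeZero r] (h : IsPartialSequencing t χ S f L) (hS : IsBalanced χ S)
    {x : G} (hxS : x ∈ S) (hx1 : x ≠ 1) (hL : L + r * (2 * t + 2) ≤ #S) :
    ∃ f' L', L ≤ L' ∧ L' ≤ L + (r + 1) ∧ Set.EqOn f' f (Set.Iio L) ∧
      IsPartialSequencing t χ S f' L' ∧ ∃ i < L', f' i = x := by
  by_cases hx : ∃ i < L, f i = x
  · exact ⟨f, L, le_rfl, by omega, Set.eqOn_refl f _, h, hx⟩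
  push Not at hx
  let k := (χ x - (L + 1)).val
  have hkr : k < r := ZMod.val_lt _
  have hχ : χ x = (L + k : ℕ) + 1 := by
    simp only [k, Nat.cast_add, ZMod.natCast_zmod_val]
    ring
  obtain ⟨f', heq, h', hf'⟩ := h.exists_extend hS {x} k (by rw [card_singleton]; nlinarith)
  obtain ⟨y, h''⟩ := h'.exists_append_append hS hxS hx1 hχ (fun i hi => by
    rcases lt_or_ge i L with hiL | hiL
    · rw [heq hiL]
      exact hx i hiL
    · exact notMem_singleton.1 (hf' i ⟨hiL, hi⟩)) (by linarith)
  refine ⟨_, L + k + 2, by omega, by omega, fun i (hi : i < L) => ?_, h'', L + k + 1, by omega,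
    update_self ..⟩
  rw [update_of_ne (by omega), update_of_ne (by omega), heq hi]

lemma exists_extend_subset [NeZero r] (h : IsPartialSequencing t χ S f L) (hS : IsBalanced χ S)
    (h1 : 1 ∉ S) (H : Finset G) (hHS : H ⊆ S)
    (hL : L + (r + 1) * #H + r * (2 * t + 2) ≤ #S) :
    ∃ f' L', L ≤ L' ∧ L' ≤ L + (r + 1) * #H ∧ Set.EqOn f' f (Set.Iio L) ∧
      IsPartialSequencing t χ S f' L' ∧ ∀ x ∈ H, ∃ i < L', f' i = x := by
  classical
  induction H using Finset.induction_on with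
  | empty => exact ⟨f, L, le_rfl, by omega, Set.eqOn_refl f _, h, by simp⟩
  | insert x H hxH ih =>
    rw [card_insert_of_notMem hxH, mul_add_one] at hL ⊢
    obtain ⟨hxS, hHS⟩ := insert_subset_iff.1 hHS
    obtain ⟨f₁, L₁, hL₁, hL₁', heq₁, h₁, hH⟩ := ih hHS (by omega)
    obtain ⟨f₂, L₂, hL₂, hL₂', heq₂, h₂, hx⟩ :=
      h₁.exists_extend_mem hS hxS (ne_of_mem_of_not_mem hxS h1) (by omega)
    refine ⟨f₂, L₂, by omega, by omega,
      (heq₂.mono (Set.Iio_subset_Iio hL₁)).trans heq₁, h₂, forall_mem_insert _ _ _ |>.2 ⟨hx, ?_⟩⟩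
    intro z hz
    obtain ⟨i, hi, rfl⟩ := hH z hz
    exact ⟨i, by omega, heq₂ hi⟩

end IsPartialSequencing

/-- Every element of `S` not among the first `L` entries of `f` is insertable at every position
below `A` that has distance at least `t` from `J`, the set of positions at which an exchange has
already taken place. -/
def IsAbsorbing (t : ℕ) (S : Finset G) (A : ℕ) (f : ℕ → G) (L : ℕ) (J : Finset ℕ) : Prop :=
  ∀ x ∈ S, (∀ i < L, f i ≠ x) → ∀ j < A, (∀ j' ∈ J, j + t ≤ j' ∨ j' + t ≤ j) →
    IsInsertable t f j x

lemma IsAbsorbing.extend {A : ℕ} {f f' : ℕ → G} {L L' : ℕ} {J : Finset ℕ}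
    (h : IsAbsorbing t S A f L J) (hA : A + t ≤ L) (hL : L ≤ L')
    (heq : Set.EqOn f' f (Set.Iio L)) : IsAbsorbing t S A f' L' J := by
  intro x hxS hx j hj hJ
  have hx' : ∀ i < L, f i ≠ x := fun i hi => heq hi ▸ hx i (hi.trans_le hL)
  exact (h x hxS hx' j hj hJ).congr fun i hi _ => (heq (Set.mem_Iio.2 (by omega))).symm

lemma IsAbsorbing.update_update {A : ℕ} {f : ℕ → G} {L : ℕ} {J : Finset ℕ}
    (h : IsAbsorbing t S A f L J) (hA : A + t ≤ L) {j : ℕ} (hj : j < L) (x : G) :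
    IsAbsorbing t S A (update (update f j x) L (f j)) (L + 1) (insert j J) := by
  intro z hzS hz j' hj' hJ
  obtain ⟨hjj', hJ⟩ := forall_mem_insert _ _ _ |>.1 hJ
  have hz' : ∀ i < L, f i ≠ z := fun i hi => by
    rcases eq_or_ne i j with rfl | hij
    · simpa only [update_self] using hz L L.lt_succ_self
    · simpa only [update_of_ne hi.ne, update_of_ne hij] using hz i (Nat.lt_add_right 1 hi)
  refine (h z hzS hz' j' hj' hJ).congr fun i hi hi' => ?_
  rw [update_of_ne (by omega), update_of_ne (by omega)]

lemma IsPartialSequencing.exists_absorb_position [NeZero r] {f : ℕ → G} {L : ℕ}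
    (h : IsPartialSequencing t χ S f L) (n : ℕ) (J : Finset ℕ) (hn : r * n ≤ L)
    (hJ : #J * (2 * t) + t < n) :
    ∃ j < r * n, (j : ZMod r) = L ∧ IsAppendable t f L (f j) ∧
      ∀ j' ∈ J, j + t ≤ j' ∨ j' + t ≤ j := by
  classical
  obtain ⟨F, hF, hFapp⟩ := exists_card_le_isAppendable t f L
  let near : Finset ℕ := J.biUnion fun j' => Ico (j' + 1 - t) (j' + t)
  let blocked : Finset ℕ := {j ∈ range L | f j ∈ F}
  have hnear : #near ≤ #J * (2 * t) := card_biUnion_le_card_mul _ _ _ fun j' _ => by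
    rw [Nat.card_Ico]
    omega
  have hblocked : #blocked ≤ t :=
    (card_le_card_of_injOn f (fun j hj => (mem_filter.1 hj).2) (h.injOn.mono fun j hj =>
      mem_range.1 (mem_filter.1 hj).1)).trans hF
  have hcard : #(near ∪ blocked) < #{j ∈ range (r * n) | ((j : ℕ) : ZMod r) = L} := by
    rw [card_filter_range_natCast_eq, Nat.mul_div_cancel_left _ (NeZero.pos r)]
    have := card_union_le near blocked
    omega
  obtain ⟨j, hj, hjbad⟩ := exists_mem_notMem_of_card_lt_card hcard
  obtain ⟨hjn, hjL⟩ := mem_filter.1 hj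
  rw [mem_range] at hjn
  rw [mem_union, not_or] at hjbad
  refine ⟨j, hjn, hjL, hFapp _ fun hjF => hjbad.2 ?_, fun j' hj' => ?_⟩
  · exact mem_filter.2 ⟨mem_range.2 (hjn.trans_le hn), hjF⟩
  · by_contra! hclose
    exact hjbad.1 (mem_biUnion.2 ⟨j', hj', mem_Ico.2 (by omega)⟩)

lemma IsPartialSequencing.exists_extend_of_isAbsorbing [NeZero r] {f : ℕ → G} {L n : ℕ}
    (h : IsPartialSequencing t χ S f L) (hS : IsBalanced χ S)
    (habs : IsAbsorbing t S (r * n) f L ∅) (hn : r * n + t ≤ L) (k : ℕ) (hk : L + k ≤ #S)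
    (hkn : k * (2 * t) + t < n) :
    ∃ f' J, #J ≤ k ∧ IsPartialSequencing t χ S f' (L + k) ∧
      IsAbsorbing t S (r * n) f' (L + k) J := by
  classical
  induction k with
  | zero => exact ⟨f, ∅, card_empty.le, h, habs⟩
  | succ k ih =>
    have hkn' : k * (2 * t) + t < n := by linarith
    obtain ⟨f', J, hJ, h', habs'⟩ := ih (by omega) hkn'
    have hJn : #J * (2 * t) + t < n := lt_of_le_of_lt (by gcongr) hkn'
    obtain ⟨x, hxS, hχ, -, hx⟩ := h'.exists_unused hS ∅ (by rw [card_empty, mul_zero]; omega)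
    obtain ⟨j, hj, hjL, hfj, hfar⟩ := h'.exists_absorb_position n J (by omega) hJn
    exact ⟨_, insert j J, (card_insert_le j J).trans (by omega),
      h'.absorb hxS hχ hx (by omega) (by omega) hjL (habs' x hxS hx j hj hfar) hfj,
      habs'.update_update (by omega) (by omega) x⟩

lemma exists_isPartialSequencing_isAbsorbing [NeZero r] (hS : IsBalanced χ S) (h1 : 1 ∉ S) (A : ℕ)
    (hA : A + t + (r + 1) * (A * (t * t)) + r * (2 * t + 2) ≤ #S) :
    ∃ f L, A + t ≤ L ∧ L + r * t ≤ #S ∧ IsPartialSequencing t χ S f L ∧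
      IsAbsorbing t S A f L ∅ := by
  classical
  have h₀ : IsPartialSequencing t χ S (1 : ℕ → G) 0 :=
    ⟨by simp, by simp, by simp, fun a b hab hb => by omega⟩
  have hrt : r * t ≤ r * (2 * t + 2) := Nat.mul_le_mul_left r (by omega)
  obtain ⟨f₁, -, h₁, -⟩ := h₀.exists_extend hS ∅ (A + t) (by rw [card_empty, add_zero]; omega)
  choose F hF hFins using exists_card_le_isInsertable t f₁
  let H : Finset G := {x ∈ (range A).biUnion F | x ∈ S}
  have hH : (r + 1) * #H ≤ (r + 1) * (A * (t * t)) := by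
    gcongr
    grw [card_filter_le, card_biUnion_le_card_mul _ _ _ fun j _ => hF j, card_range]
  obtain ⟨f₂, L, hL, hL', heq, h₂, hHf⟩ :=
    h₁.exists_extend_subset hS h1 H (fun x hx => (mem_filter.1 hx).2) (by omega)
  refine ⟨f₂, L, by omega, by omega, h₂, fun x hxS hx j hj _ => ?_⟩
  have hxH : x ∉ H := fun hxH => by
    obtain ⟨i, hi, rfl⟩ := hHf x hxH
    exact hx i hi rfl
  have hxF : x ∉ F j := fun hxF =>
    hxH (mem_filter.2 ⟨mem_biUnion.2 ⟨j, mem_range.2 hj, hxF⟩, hxS⟩)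
  exact (hFins j x hxF).congr fun i hi _ => (heq (Set.mem_Iio.2 (by omega))).symm

lemma exists_isPartialSequencing_card [NeZero r] (hS : IsBalanced χ S) (h1 : 1 ∉ S) (n : ℕ)
    (hn : r * t * (2 * t) + t < n)
    (hcard : r * n + t + (r + 1) * (r * n * (t * t)) + r * (2 * t + 2) ≤ #S) :
    ∃ f, IsPartialSequencing t χ S f #S := by
  obtain ⟨f₁, L, hnL, hL, h₁, habs⟩ := exists_isPartialSequencing_isAbsorbing hS h1 (r * n) hcard
  obtain ⟨k, hk⟩ := Nat.exists_eq_add_of_le hL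
  obtain ⟨f₂, heq, h₂, -⟩ := h₁.exists_extend hS ∅ k (by rw [card_empty, add_zero]; omega)
  obtain ⟨f₃, -, -, h₃, -⟩ := h₂.exists_extend_of_isAbsorbing hS
    (habs.extend hnL (Nat.le_add_right L k) heq) (by omega) (r * t) (by omega) hn
  rw [show #S = L + k + r * t by omega]
  exact ⟨f₃, h₃⟩

lemma IsPartialSequencing.exists_list {f : ℕ → G} (h : IsPartialSequencing t χ S f #S) :
    ∃ l : List G, IsOrderingOf l S ∧ l.IsChain (fun a b => χ b = χ a + 1) ∧ WeakSeqList t l := by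
  classical
  have hinj : Set.InjOn f (range #S) := h.injOn.mono fun i hi => mem_range.1 hi
  have himage : (range #S).image f = S :=
    eq_of_subset_of_card_le (image_subset_iff.2 fun i hi => h.mem i (mem_range.1 hi))
      (by rw [card_image_of_injOn hinj, card_range])
  refine ⟨(List.range #S).map f, ⟨?_, fun x => ?_⟩, ?_, ?_⟩
  · exact List.nodup_range.map_on fun i hi j hj => hinj (by simpa using hi) (by simpa using hj)
  · conv_rhs => rw [← himage]
    simp
  · refine List.isChain_iff_getElem.2 fun i hi => ?_
    rw [List.length_map, List.length_range] at hi
    simp only [List.getElem_map, List.getElem_range]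
    rw [h.color _ hi, h.color _ (by omega), Nat.cast_succ]
  · intro i j hij hj hjt
    rw [List.length_map, List.length_range] at hj
    rw [prod_take_map_range f (by omega), prod_take_map_range f hj,
      ← segProd_mul_segProd f i.zero_le hij.le, ne_eq, left_eq_mul]
    exact h.segProd_ne_one i j hij hj (by omega)

theorem stmt1_general (r t : ℕ) [NeZero r] :
    ∃ K : ℕ, ∀ (G : Type*) [Group G] (χ : G → ZMod r) (S : Finset G), (1 : G) ∉ S →
      IsBalanced χ S → K ≤ #S →
      ∃ l : List G, IsOrderingOf l S ∧ l.IsChain (fun a b => χ b = χ a + 1) ∧ WeakSeqList t l := by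
  let n := r * t * (2 * t) + t + 1
  refine ⟨r * n + t + (r + 1) * (r * n * (t * t)) + r * (2 * t + 2),
    fun G _ χ S h1 hS hK => ?_⟩
  obtain ⟨f, hf⟩ := exists_isPartialSequencing_card hS h1 n (Nat.lt_succ_self _) hK
  exact hf.exists_list

end CyclicColoring

section SemidirectProduct

variable {N : Type*} [Group N] {φ : Z2 →* MulAut N}

lemma isBalanced_of_hasType {S : Finset (N ⋊[φ] Z2)} {a : ℕ} (hS : HasType S a a) :
    IsBalanced (fun g : N ⋊[φ] Z2 => g.right.toAdd) S := by
  have hsum := Finset.card_filter_add_card_filter_not (s := S) (fun g => g.right = 1)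
  have heven : (S.filter fun g => g.right = 1).card = a := hS.1
  have hcard : S.card = a + a := hS.2
  have hodd : ∀ g : N ⋊[φ] Z2, g.right.toAdd = 1 ↔ ¬ g.right = 1 := fun g => by
    generalize g.right = z
    revert z
    decide
  intro c
  fin_cases c
  · change 2 * (S.filter fun g => g.right = 1).card = S.card
    omega
  · change 2 * (S.filter fun g => g.right.toAdd = 1).card = S.card
    simp only [hodd]
    omega

lemma altList_of_isChain {l : List (N ⋊[φ] Z2)}
    (hl : l.IsChain fun a b => b.right.toAdd = a.right.toAdd + 1) : AltList l :=
  hl.imp fun a b hab heq => by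
    rw [heq, left_eq_add] at hab
    exact one_ne_zero hab

end SemidirectProduct

/-- For every positive integer `t` there is a constant `K(t)` such that
for every finite group `N`, every `φ : Z_2 → Aut(N)`, and every balanced subset `S` of
`(N ⋊_φ Z_2) \ {(0,0)}` of size `k ≥ K(t)`, `S` admits an alternating parity `t`-weak
sequencing. -/
theorem stmt1 (t : ℕ) (ht : 0 < t) :
    ∃ K : ℕ, ∀ (N : Type*) [Group N] [Finite N] (φ : Z2 →* MulAut N)
      (S : Finset (N ⋊[φ] Z2)), (1 : N ⋊[φ] Z2) ∉ S →
      Even S.card → HasType S (S.card / 2) (S.card / 2) → K ≤ S.card →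
      ∃ l : List (N ⋊[φ] Z2), IsOrderingOf l S ∧ AltList l ∧ WeakSeqList t l := by
  obtain ⟨K, hK⟩ := stmt1_general 2 t
  refine ⟨K, fun N _ _ φ S h1 _ htype hcard => ?_⟩
  obtain ⟨l, hord, hchain, hweak⟩ := hK _ _ S h1 (isBalanced_of_hasType htype) hcard
  exact ⟨l, hord, altList_of_isChain hchain, hweak⟩
end

section
/- For every positive integer t there exists a constant K(t) such that for every finite group G and every subset S of G \ {0} of size k ≥ K(t), the set S is t-weakly sequenceable. -/
/-!
Inserting `x` between two sequenced lists `A` and `B` creates a forbidden coincidence only if `x`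
is the inverse of a product of a short prefix of `B` and a short suffix of `A`, so at most `t ^ 2`
elements are bad at a given position.  Hence a greedy construction sequences all but `t ^ 2`
elements of `S`.  To place the leftovers, begin with a segment made of `t ^ 2` slots of length
`2 * t`, each able to take one element in its middle: the elements bad for a slot depend on that
slot only, whatever surrounds it.  There are at most `t ^ 4` elements bad for some slot, and they
are put right after the initial segment, each preceded by a suitably chosen spacer.  The greedy
construction goes on from there, and every leftover can then go into a slot of its own.
-/

section WeakSeq

variable {G : Type*} [Group G] {t : ℕ} {A B : List G}

namespace WeakSeqList

theorem nil : WeakSeqList t ([] : List G) := by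
  intro i j hij hj
  simp only [List.length_nil] at hj
  omega

theorem singleton {g : G} (hg : g ≠ 1) : WeakSeqList t [g] := by
  intro i j hij hj _
  obtain ⟨rfl, rfl⟩ : i = 0 ∧ j = 1 := by simp only [List.length_singleton] at hj; omega
  simpa using hg.symm

theorem of_append_left (h : WeakSeqList t (A ++ B)) : WeakSeqList t A := by
  intro i j hij hj ht
  have hne := h i j hij (by rw [List.length_append]; omega) ht
  rwa [List.take_append_of_le_length (by omega), List.take_append_of_le_length hj] at hne

theorem of_append_right (h : WeakSeqList t (A ++ B)) : WeakSeqList t B := by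
  intro i j hij hj ht
  have hne := h (A.length + i) (A.length + j) (by omega) (by rw [List.length_append]; omega)
    (by omega)
  simpa only [List.take_length_add_append, List.prod_append, ne_eq, mul_right_inj] using hne

end WeakSeqList

variable [DecidableEq G]

/-- The elements whose insertion between `A` and `B` may create a block of length at most `t` with
product `1`: those that cancel a prefix of `B` together with a suffix of `A`, both of length less
than `t`. -/
def insertionObstructions (t : ℕ) (A B : List G) : Finset G :=
  Finset.image₂ (fun i j => ((B.take j).prod * (A.rtake i).prod)⁻¹)
    (Finset.range t) (Finset.range t)

theorem card_insertionObstructions_le (t : ℕ) (A B : List G) :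
    (insertionObstructions t A B).card ≤ t ^ 2 :=
  (Finset.card_image₂_le _ _ _).trans_eq (by rw [Finset.card_range, sq])

theorem insertionObstructions_append_append (U V : List G) (hA : t ≤ A.length)
    (hB : t ≤ B.length) :
    insertionObstructions t (U ++ A) (B ++ V) = insertionObstructions t A B := by
  refine Finset.image₂_congr fun i hi j hj => ?_
  rw [Finset.mem_range] at hi hj
  have hsuffix : (U ++ A).rtake i = A.rtake i := by
    rw [List.rtake, List.rtake, List.length_append, Nat.add_sub_assoc (by omega),
      List.drop_length_add_append]
  rw [hsuffix, List.take_append_of_le_length (by omega)]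

theorem WeakSeqList.append_cons {x : G} (hA : WeakSeqList t A) (hB : WeakSeqList t B)
    (hx : x ∉ insertionObstructions t A B) : WeakSeqList t (A ++ x :: B) := by
  intro i j hij hj ht heq
  rw [List.length_append, List.length_cons] at hj
  rcases le_or_gt j A.length with hjA | hjA
  · rw [List.take_append_of_le_length (by omega), List.take_append_of_le_length hjA] at heq
    exact hA i j hij hjA ht heq
  obtain ⟨n, rfl⟩ : ∃ n, j = A.length + (n + 1) := ⟨j - A.length - 1, by omega⟩
  rw [List.take_length_add_append, List.take_succ_cons, List.prod_append, List.prod_cons] at heq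
  rcases le_or_gt i A.length with hiA | hiA
  · have hsuffix : A.drop i = A.rtake (A.length - i) := by
      rw [List.rtake, Nat.sub_sub_self hiA]
    rw [List.take_append_of_le_length hiA, ← List.prod_take_mul_prod_drop A i, hsuffix, mul_assoc,
      left_eq_mul, ← mul_assoc] at heq
    refine hx (Finset.mem_image₂.2 ⟨A.length - i, ?_, n, ?_, ?_⟩)
    · rw [Finset.mem_range]; omega
    · rw [Finset.mem_range]; omega
    · rw [mul_inv_rev, inv_mul_eq_iff_eq_mul]
      exact (eq_inv_of_mul_eq_one_left heq).symm
  · obtain ⟨m, rfl⟩ : ∃ m, i = A.length + (m + 1) := ⟨i - A.length - 1, by omega⟩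
    rw [List.take_length_add_append, List.take_succ_cons, List.prod_append, List.prod_cons,
      mul_right_inj, mul_right_inj] at heq
    exact hB m n (by omega) (by omega) (by omega) heq

theorem WeakSeqList.append_cons_of_append {x : G} {U V : List G} (hA : t ≤ A.length)
    (hB : t ≤ B.length) (hx : x ∉ insertionObstructions t A B)
    (h : WeakSeqList t ((U ++ A) ++ (B ++ V))) : WeakSeqList t ((U ++ A) ++ x :: (B ++ V)) :=
  h.of_append_left.append_cons h.of_append_right
    (by rwa [insertionObstructions_append_append U V hA hB])

end WeakSeq

section Absorption

variable {G : Type*} [Group G] {t r : ℕ} {H : Finset G}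

/-- The initial segment `P` can absorb up to `r` elements outside `H`: they can be added to any
sequenced list that begins with `P`. -/
def CanAbsorb (t r : ℕ) (P : List G) (H : Finset G) : Prop :=
  ∀ Q X : List G, WeakSeqList t (P ++ Q) → X.length ≤ r → (∀ x ∈ X, x ∉ H) →
    ∃ l, l.Perm (P ++ Q ++ X) ∧ WeakSeqList t l

theorem canAbsorb_zero (P : List G) (H : Finset G) : CanAbsorb t 0 P H := by
  intro Q X hPQ hX _
  obtain rfl : X = [] := List.length_eq_zero_iff.1 (Nat.le_zero.1 hX)
  exact ⟨P ++ Q, by rw [List.append_nil], hPQ⟩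

theorem CanAbsorb.append_slot [DecidableEq G] {P A B : List G} (hP : CanAbsorb t r P H)
    (hA : t ≤ A.length) (hB : t ≤ B.length) :
    CanAbsorb t (r + 1) (P ++ (A ++ B)) (H ∪ insertionObstructions t A B) := by
  intro Q X hQ hX hXH
  rcases X with _ | ⟨x, X⟩
  · exact ⟨_, by rw [List.append_nil], hQ⟩
  simp only [List.forall_mem_cons, Finset.mem_union, not_or] at hXH
  obtain ⟨⟨-, hx⟩, hXH⟩ := hXH
  have hins : WeakSeqList t (P ++ (A ++ x :: (B ++ Q))) := by
    rw [← List.append_assoc]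
    exact WeakSeqList.append_cons_of_append hA hB hx (by simpa only [List.append_assoc] using hQ)
  obtain ⟨l, hperm, hl⟩ := hP _ X hins (Nat.le_of_succ_le_succ hX) fun y hy => (hXH y hy).1
  refine ⟨l, hperm.trans ?_, hl⟩
  rw [List.perm_iff_count]
  intro a
  simp only [List.count_append, List.count_cons]
  omega

theorem exists_canAbsorb (t r : ℕ) (P : List G) (hP : r * (2 * t) ≤ P.length) :
    ∃ H : Finset G, H.card ≤ r * t ^ 2 ∧ CanAbsorb t r P H := by
  classical
  induction r generalizing P with
  | zero => exact ⟨∅, by simp, canAbsorb_zero P ∅⟩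
  | succ r ih =>
    rw [Nat.succ_mul] at hP
    obtain ⟨R, A, B, rfl, hR, hA, hB⟩ : ∃ R A B, P = R ++ (A ++ B) ∧
        r * (2 * t) ≤ R.length ∧ t ≤ A.length ∧ t ≤ B.length := by
      refine ⟨P.take (r * (2 * t)), (P.drop (r * (2 * t))).take t, (P.drop (r * (2 * t))).drop t,
        by simp only [List.take_append_drop], ?_, ?_, ?_⟩ <;>
      simp only [List.length_take, List.length_drop] <;> omega
    obtain ⟨H, hH, hRH⟩ := ih R hR
    refine ⟨_, (Finset.card_union_le _ _).trans ?_, hRH.append_slot hA hB⟩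
    rw [Nat.succ_mul]
    exact Nat.add_le_add hH (card_insertionObstructions_le t A B)

end Absorption

/-- `l` is a `t`-weak sequencing of a subset of `S`. -/
structure IsPartialSequencing_s2 {G : Type*} [Group G] (t : ℕ) (S : Finset G) (l : List G) :
    Prop where
  weakSeq : WeakSeqList t l
  nodup : l.Nodup
  mem_of_mem : ∀ x ∈ l, x ∈ S

section PartialSequencing

variable {G : Type*} [Group G] {t : ℕ} {S : Finset G} {P : List G}

namespace IsPartialSequencing_s2

theorem nil : IsPartialSequencing_s2 t S [] :=
  ⟨.nil, List.nodup_nil, by simp⟩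

theorem singleton {g : G} (hg : g ≠ 1) (hgS : g ∈ S) : IsPartialSequencing_s2 t S [g] :=
  ⟨.singleton hg, List.nodup_singleton g, by simpa using hgS⟩

theorem exists_append_cons {A B : List G} (hA : IsPartialSequencing_s2 t S A)
    (hB : IsPartialSequencing_s2 t S B) (hAB : A.Disjoint B)
    (hcard : A.length + B.length + t ^ 2 < S.card) :
    ∃ x, IsPartialSequencing_s2 t S (A ++ x :: B) := by
  classical
  obtain ⟨x, hxS, hx⟩ : ∃ x ∈ S, x ∉ (A ++ B).toFinset ∪ insertionObstructions t A B := by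
    apply Finset.exists_mem_notMem_of_card_lt_card
    have hAB := (A ++ B).toFinset_card_le
    rw [List.length_append] at hAB
    have hunion := Finset.card_union_le (A ++ B).toFinset (insertionObstructions t A B)
    have hobs := card_insertionObstructions_le t A B
    omega
  rw [Finset.mem_union, List.mem_toFinset, not_or] at hx
  refine ⟨x, hA.weakSeq.append_cons hB.weakSeq hx.2, ?_, ?_⟩
  · exact List.nodup_middle.2 (List.nodup_cons.2 ⟨hx.1, hA.nodup.append hB.nodup hAB⟩)
  · simp only [List.forall_mem_append, List.forall_mem_cons]
    exact ⟨hA.mem_of_mem, hxS, hB.mem_of_mem⟩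

theorem exists_prefix_length_eq (hP : IsPartialSequencing_s2 t S P) {n : ℕ} (hn : P.length ≤ n)
    (hcard : n + t ^ 2 ≤ S.card) :
    ∃ Q, P <+: Q ∧ IsPartialSequencing_s2 t S Q ∧ Q.length = n := by
  induction n, hn using Nat.le_induction with
  | base => exact ⟨P, List.prefix_rfl, hP, rfl⟩
  | succ n _ ih =>
    obtain ⟨Q, hPQ, hQ, rfl⟩ := ih (by omega)
    obtain ⟨x, hx⟩ := hQ.exists_append_cons nil (List.disjoint_nil_right Q)
      (by rw [List.length_nil]; omega)
    exact ⟨Q ++ [x], hPQ.trans (List.prefix_append Q [x]), hx, by simp⟩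

theorem exists_prefix_forall_mem (hP : IsPartialSequencing_s2 t S P) {H : Finset G} (hHS : H ⊆ S)
    (hH : 1 ∉ H) (hcard : P.length + 2 * H.card + t ^ 2 ≤ S.card) :
    ∃ Q, P <+: Q ∧ IsPartialSequencing_s2 t S Q ∧ Q.length ≤ P.length + 2 * H.card ∧
      ∀ g ∈ H, g ∈ Q := by
  classical
  induction H using Finset.induction_on with
  | empty => exact ⟨P, List.prefix_rfl, hP, le_add_right le_rfl, by simp⟩
  | insert g H hg ih =>
    rw [Finset.card_insert_of_notMem hg] at hcard ⊢
    rw [Finset.mem_insert, not_or] at hH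
    obtain ⟨hgS, hHS⟩ := Finset.insert_subset_iff.1 hHS
    obtain ⟨Q, hPQ, hQ, hlen, hmem⟩ := ih hHS hH.2 (by omega)
    by_cases hgQ : g ∈ Q
    · exact ⟨Q, hPQ, hQ, by omega, (Finset.forall_mem_insert _ _ _).2 ⟨hgQ, hmem⟩⟩
    · obtain ⟨x, hx⟩ := hQ.exists_append_cons (singleton (Ne.symm hH.1) hgS)
        (List.disjoint_singleton.2 hgQ) (by rw [List.length_singleton]; omega)
      refine ⟨Q ++ [x, g], hPQ.trans (List.prefix_append Q _), hx, ?_, ?_⟩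
      · simp only [List.length_append, List.length_cons, List.length_nil]
        omega
      · refine (Finset.forall_mem_insert _ _ _).2 ⟨by simp, fun y hy => ?_⟩
        exact List.mem_append_left _ (hmem y hy)

theorem isOrderingOf_append_sdiff [DecidableEq G] {Q : List G} (hQ : IsPartialSequencing_s2 t S Q) :
    IsOrderingOf (Q ++ (S \ Q.toFinset).toList) S := by
  refine ⟨hQ.nodup.append (Finset.nodup_toList _) fun x hxQ hx => ?_, fun x => ?_⟩
  · rw [Finset.mem_toList, Finset.mem_sdiff, List.mem_toFinset] at hx
    exact hx.2 hxQ
  · rw [List.mem_append, Finset.mem_toList, Finset.mem_sdiff, List.mem_toFinset]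
    have := hQ.mem_of_mem x
    tauto

theorem length_toList_sdiff [DecidableEq G] {Q : List G} (hQ : IsPartialSequencing_s2 t S Q) :
    (S \ Q.toFinset).toList.length = S.card - Q.length := by
  rw [Finset.length_toList, Finset.card_sdiff_of_subset, List.toFinset_card_of_nodup hQ.nodup]
  exact fun x hx => hQ.mem_of_mem x (List.mem_toFinset.1 hx)

end IsPartialSequencing_s2

theorem IsOrderingOf.of_perm {l l' : List G} (h : IsOrderingOf l S) (hl : l'.Perm l) :
    IsOrderingOf l' S :=
  ⟨hl.nodup_iff.2 h.1, fun x => hl.mem_iff.trans (h.2 x)⟩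

theorem CanAbsorb.exists_isOrderingOf {r : ℕ} {H : Finset G} (hPH : CanAbsorb t r P H)
    {Q : List G} (hPQ : P <+: Q) (hQ : IsPartialSequencing_s2 t S Q)
    (hH : ∀ x ∈ S, x ∈ H → x ∈ Q) (hcard : S.card ≤ Q.length + r) :
    ∃ l, IsOrderingOf l S ∧ WeakSeqList t l := by
  classical
  obtain ⟨R, rfl⟩ := hPQ
  obtain ⟨l, hperm, hl⟩ := hPH R (S \ (P ++ R).toFinset).toList hQ.weakSeq
    (by rw [hQ.length_toList_sdiff]; omega) (by
      intro x hx hxH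
      rw [Finset.mem_toList, Finset.mem_sdiff, List.mem_toFinset] at hx
      exact hx.2 (hH x hx.1 hxH))
  exact ⟨l, hQ.isOrderingOf_append_sdiff.of_perm hperm, hl⟩

end PartialSequencing

theorem stmt2_general (t : ℕ) {G : Type*} [Group G] (S : Finset G) (h1 : (1 : G) ∉ S)
    (hS : 2 * t ^ 4 + 2 * t ^ 3 + t ^ 2 ≤ S.card) :
    ∃ l : List G, IsOrderingOf l S ∧ WeakSeqList t l := by
  obtain ⟨P, -, hP, hPlen⟩ :=
    (IsPartialSequencing_s2.nil (t := t) (S := S)).exists_prefix_length_eq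
      (Nat.zero_le (2 * t ^ 3)) (by omega)
  obtain ⟨H, hHcard, hPH⟩ := exists_canAbsorb t (t ^ 2) P (hPlen.trans (by ring)).ge
  classical
  have hHS : (H ∩ S).card ≤ t ^ 4 :=
    (Finset.card_le_card Finset.inter_subset_left).trans (hHcard.trans_eq (by ring))
  obtain ⟨Q, hPQ, hQ, hQlen, hHQ⟩ := hP.exists_prefix_forall_mem (H := H ∩ S)
    Finset.inter_subset_right (fun h => h1 (Finset.mem_inter.1 h).2) (by omega)
  obtain ⟨Q', hQQ', hQ', hQ'len⟩ := hQ.exists_prefix_length_eq (n := S.card - t ^ 2)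
    (by omega) (by omega)
  refine hPH.exists_isOrderingOf (hPQ.trans hQQ') hQ' (fun x hxS hxH => ?_) (by omega)
  exact hQQ'.subset (hHQ x (Finset.mem_inter.2 ⟨hxH, hxS⟩))

/-- For every positive integer `t` there exists a constant `K(t)` such
that for every finite group `G` and every subset `S` of `G \ {0}` of size `k ≥ K(t)`,
`S` is `t`-weakly sequenceable. -/
theorem stmt2 (t : ℕ) (ht : 0 < t) :
    ∃ K : ℕ, ∀ (G : Type*) [Group G] [Finite G] (S : Finset G),
      (1 : G) ∉ S → K ≤ S.card →
      ∃ l : List G, IsOrderingOf l S ∧ WeakSeqList t l := by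
  exact ⟨_, fun _ _ _ S h1 hS => stmt2_general t S h1 hS⟩
end

section
/- For all positive integers t and ℓ there exists a constant k_{t,ℓ} such that the following holds: for every (not necessarily abelian) group (G,+) and every finite subset S of G of size k > k_{t,ℓ}, there exists a subset T ⊆ S with |T| ≥ ℓ such that no nonempty subset of T of size h ≤ t admits an ordering of its elements whose sum is the identity 0 of G. -/
/-!
Build `T` greedily. In a Dedekind-finite monoid the property of having product `1` is invariant
under cyclic rotation, so a list of length at most `t` through a new element `x` with product `1`
can be rotated to `x * w = 1` with `w` a product of fewer than `t` elements of `T`. There are at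
most `(|T| + 1) ^ (t - 1)` such `w`, and each has at most one left inverse, so only boundedly many
`x` are forbidden.
-/

open Finset

/-- `ProdOneFree t T` says that no nonempty subset of `T` of size at most `t` is product-one (in
additive notation, zero-sum) with respect to some ordering. An ordering of `Z` is encoded as a
duplicate-free list with the same members as `Z`. -/
def ProdOneFree {M : Type*} [Monoid M] (t : ℕ) (T : Finset M) : Prop :=
  ∀ Z ⊆ T, Z.Nonempty → #Z ≤ t →
    ¬ ∃ l : List M, l.Nodup ∧ (∀ x, x ∈ l ↔ x ∈ Z) ∧ l.prod = 1

section Monoid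

variable {M : Type*} [Monoid M] {t : ℕ} {T : Finset M}

theorem prodOneFree_iff_forall_list :
    ProdOneFree t T ↔ ∀ l : List M, l.Nodup → (∀ x ∈ l, x ∈ T) → l ≠ [] → l.length ≤ t →
      l.prod ≠ 1 := by
  classical
  constructor
  · intro hT l hl hlT hne hlen hprod
    refine hT l.toFinset (fun x hx ↦ hlT x (List.mem_toFinset.mp hx))
      (l.toFinset_nonempty_iff.mpr hne) ((List.toFinset_card_of_nodup hl).trans_le hlen) ?_
    exact ⟨l, hl, fun x ↦ List.mem_toFinset.symm, hprod⟩
  · rintro hT Z hZT hZ hZt ⟨l, hl, hlZ, hprod⟩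
    obtain rfl : l.toFinset = Z := by ext x; rw [List.mem_toFinset, hlZ]
    exact hT l hl (fun x hx ↦ hZT (List.mem_toFinset.mpr hx)) (l.toFinset_nonempty_iff.mp hZ)
      ((List.toFinset_card_of_nodup hl).symm.trans_le hZt) hprod

theorem prodOneFree_empty (t : ℕ) : ProdOneFree t (∅ : Finset M) :=
  fun _ hZ hne _ ↦ absurd (subset_empty.mp hZ) hne.ne_empty

open scoped Pointwise in
theorem list_prod_mem_insert_one_pow [DecidableEq M] {l : List M} {n : ℕ} (hl : ∀ x ∈ l, x ∈ T)
    (hn : l.length ≤ n) : l.prod ∈ insert 1 T ^ n := by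
  have hmem : l.prod ∈ insert 1 T ^ l.length :=
    mem_pow.mpr ⟨fun i ↦ ⟨l[i], mem_insert_of_mem (hl _ (l.getElem_mem i.isLt))⟩,
      congrArg List.prod List.ofFn_getElem⟩
  exact pow_subset_pow_right (mem_insert_self 1 T) hn hmem

end Monoid

section DedekindFinite

variable {M : Type*} [Monoid M] [IsDedekindFiniteMonoid M] {t : ℕ} {S T : Finset M}

theorem exists_perm_cons_mul_prod_eq_one {x : M} {l : List M} (hx : x ∈ l) (hl : l.prod = 1) :
    ∃ l' : List M, l.Perm (x :: l') ∧ x * l'.prod = 1 := by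
  obtain ⟨a, b, rfl⟩ := List.append_of_mem hx
  refine ⟨b ++ a, List.perm_append_comm, ?_⟩
  rwa [List.prod_append, mul_eq_one_comm, ← List.prod_append, List.cons_append,
    List.prod_cons] at hl

theorem exists_mem_forall_mul_ne_one {P : Finset M} (h : #P < #S) :
    ∃ x ∈ S, ∀ p ∈ P, x * p ≠ 1 := by
  by_contra! hS
  refine h.not_ge (card_le_card_of_forall_subsingleton (fun x p ↦ x * p = 1) hS ?_)
  rintro p - x ⟨-, hx⟩ y ⟨-, hy⟩
  exact left_inv_eq_right_inv hx (mul_eq_one_symm hy)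

protected theorem ProdOneFree.insert [DecidableEq M] {x : M} (hT : ProdOneFree t T)
    (hx : ∀ l : List M, l.Nodup → (∀ y ∈ l, y ∈ T) → l.length < t → x * l.prod ≠ 1) :
    ProdOneFree t (insert x T) := by
  rw [prodOneFree_iff_forall_list] at hT ⊢
  intro l hl hlT hne hlen hprod
  by_cases hxl : x ∈ l
  · obtain ⟨l', hperm, hprod'⟩ := exists_perm_cons_mul_prod_eq_one hxl hprod
    obtain ⟨hxl', hl'⟩ := List.nodup_cons.mp (hperm.nodup hl)
    refine hx l' hl' (fun y hy ↦ ?_) ?_ hprod'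
    · have hyl : y ∈ l := hperm.mem_iff.mpr (List.mem_cons_of_mem x hy)
      exact mem_of_mem_insert_of_ne (hlT y hyl) (ne_of_mem_of_not_mem hy hxl')
    · rwa [hperm.length_eq, List.length_cons] at hlen
  · exact hT l hl
      (fun y hy ↦ mem_of_mem_insert_of_ne (hlT y hy) (ne_of_mem_of_not_mem hy hxl)) hne hlen hprod

open scoped Pointwise in
theorem ProdOneFree.exists_insert [DecidableEq M] (hT : ProdOneFree t T)
    (hcard : #T + (#T + 1) ^ (t - 1) < #S) : ∃ x ∈ S \ T, ProdOneFree t (insert x T) := by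
  have hwords : #(insert 1 T ^ (t - 1)) ≤ (#T + 1) ^ (t - 1) :=
    card_pow_le.trans (Nat.pow_le_pow_left (card_insert_le 1 T) _)
  have hsdiff : #S - #T ≤ #(S \ T) := le_card_sdiff T S
  obtain ⟨x, hxS, hx⟩ : ∃ x ∈ S \ T, ∀ w ∈ insert 1 T ^ (t - 1), x * w ≠ 1 :=
    exists_mem_forall_mul_ne_one (by lia)
  exact ⟨x, hxS, hT.insert fun l _ hl hlt ↦
    hx _ (list_prod_mem_insert_one_pow hl (Nat.le_sub_one_of_lt hlt))⟩

theorem stmt3_general (t ℓ : ℕ) (S : Finset M) (hS : ℓ + ℓ ^ (t - 1) ≤ #S) :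
    ∃ T ⊆ S, #T = ℓ ∧ ProdOneFree t T := by
  classical
  induction ℓ with
  | zero => exact ⟨∅, empty_subset S, card_empty, prodOneFree_empty t⟩
  | succ ℓ ih =>
    have hS' : ℓ + ℓ ^ (t - 1) ≤ #S :=
      (add_le_add ℓ.le_succ (Nat.pow_le_pow_left ℓ.le_succ _)).trans hS
    obtain ⟨T, hTS, rfl, hT⟩ := ih hS'
    obtain ⟨x, hx, hxT⟩ := hT.exists_insert (S := S) (by lia)
    rw [mem_sdiff] at hx
    exact ⟨insert x T, insert_subset hx.1 hTS, card_insert_of_notMem hx.2, hxT⟩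

end DedekindFinite

/-- For all positive integers `t` and `ℓ` there is a constant
`k_{t,ℓ}` such that every finite subset `S` of a (not necessarily abelian) group `G`
with `|S| > k_{t,ℓ}` contains a subset `T` with `|T| ≥ ℓ` none of whose nonempty
subsets of size `h ≤ t` admits an ordering summing to the identity. -/
theorem stmt3 (t ℓ : ℕ) (ht : 0 < t) (hℓ : 0 < ℓ) :
    ∃ k : ℕ, ∀ (G : Type*) [Group G] (S : Finset G), k < S.card →
      ∃ T ⊆ S, ℓ ≤ T.card ∧
        ∀ Z ⊆ T, Z.Nonempty → Z.card ≤ t →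
          ¬ ∃ l : List G, l.Nodup ∧ (∀ x, x ∈ l ↔ x ∈ Z) ∧ l.prod = 1 := by
  refine ⟨ℓ + ℓ ^ (t - 1), fun G _ S hS ↦ ?_⟩
  obtain ⟨T, hTS, hcard, hT⟩ := stmt3_general t ℓ S hS.le
  exact ⟨T, hTS, hcard.ge, hT⟩
end

section
/- Let (G,+) be a finite group with identity 0, let S ⊆ G \ {0} have size k, and let h and t be positive integers with h ≤ k − (t−1). Then there exist h distinct elements y_1, …, y_h of S such that, setting s_0 = 0 and s_i = y_1 + ⋯ + y_i, one has s_i ≠ s_j for all indices with 0 ≤ i < j ≤ min(h, i + t). -/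
/-! Choose the `y_i` greedily. After `y_1, …, y_n` have been chosen, the next element `y ∈ S` has to
avoid these `n` elements and the solutions of `s_n y = s_i` for `n + 1 - t ≤ i ≤ n`. By left
cancellation each such equation has at most one solution, and the one for `i = n` is `y = 1`, which
is not in `S`, so at most `n + (t - 1) < |S|` elements of `S` are excluded. -/

/-- The condition on partial sums in the theorem, for the multiplicatively written list `l`: any two
partial products of `l` at most `t` steps apart are distinct. Unlike `WeakSeqList` it does not need
inverses. -/
def PartialProdsDistinctWithin {M : Type*} [Monoid M] (t : ℕ) (l : List M) : Prop :=
  ∀ i j : ℕ, i < j → j ≤ min l.length (i + t) → (l.take i).prod ≠ (l.take j).prod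

theorem exists_mem_notMem_mul_notMem {M : Type*} [Mul M] [IsLeftCancelMul M]
    {S A P : Finset M} (hcard : A.card + P.card < S.card) (a : M) :
    ∃ y ∈ S, y ∉ A ∧ a * y ∉ P := by
  classical
  have hP : P.card < ((S \ A).map (mulLeftEmbedding a)).card := by
    have := Finset.le_card_sdiff A S
    rw [Finset.card_map]
    omega
  obtain ⟨_, hmem, hnotMem⟩ := Finset.exists_mem_notMem_of_card_lt_card hP
  obtain ⟨y, hy, rfl⟩ := Finset.mem_map.mp hmem
  obtain ⟨hyS, hyA⟩ := Finset.mem_sdiff.mp hy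
  exact ⟨y, hyS, hyA, hnotMem⟩

namespace PartialProdsDistinctWithin

theorem nil {M : Type*} [Monoid M] (t : ℕ) : PartialProdsDistinctWithin t ([] : List M) := by
  intro i j hij hj
  rw [List.length_nil] at hj
  omega

theorem append_singleton {M : Type*} [Monoid M] {t : ℕ} {l : List M} {y : M}
    (hl : PartialProdsDistinctWithin t l)
    (hy : ∀ i ≤ l.length, l.length < i + t → (l.take i).prod ≠ l.prod * y) :
    PartialProdsDistinctWithin t (l ++ [y]) := by
  intro i j hij hj
  rw [List.length_append, List.length_singleton, le_min_iff] at hj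
  obtain ⟨hjlen, hjt⟩ := hj
  rw [List.take_append_of_le_length (by omega : i ≤ l.length)]
  rcases Nat.le_succ_iff.mp hjlen with hjl | rfl
  · rw [List.take_append_of_le_length hjl]
    exact hl i j hij (le_min hjl hjt)
  · rw [List.take_of_length_le (l := l ++ [y]) (by simp), List.prod_append, List.prod_singleton]
    exact hy i (by omega) (by omega)

theorem exists_append_singleton {M : Type*} [LeftCancelMonoid M] {S : Finset M} (hS : 1 ∉ S)
    {t : ℕ} (ht : 0 < t) {l : List M} (hl : PartialProdsDistinctWithin t l)
    (hcard : l.length + t ≤ S.card) :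
    ∃ y ∈ S, y ∉ l ∧ PartialProdsDistinctWithin t (l ++ [y]) := by
  classical
  let I := Finset.Ico (l.length + 1 - t) l.length
  let P := I.image fun i => (l.take i).prod
  have hP : P.card ≤ l.length - (l.length + 1 - t) :=
    Finset.card_image_le.trans_eq (Nat.card_Ico _ _)
  have hl_card : l.toFinset.card ≤ l.length := l.toFinset_card_le
  obtain ⟨y, hyS, hyl, hyP⟩ : ∃ y ∈ S, y ∉ l.toFinset ∧ l.prod * y ∉ P :=
    exists_mem_notMem_mul_notMem (by omega) l.prod
  refine ⟨y, hyS, fun hy => hyl (List.mem_toFinset.mpr hy), hl.append_singleton ?_⟩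
  intro i hi hit heq
  rcases hi.eq_or_lt with rfl | hi
  · rw [List.take_length, left_eq_mul] at heq
    exact hS (heq ▸ hyS)
  · have hiI : i ∈ I := Finset.mem_Ico.mpr ⟨by omega, hi⟩
    exact hyP (heq ▸ Finset.mem_image_of_mem _ hiI)

end PartialProdsDistinctWithin

theorem exists_partialProdsDistinctWithin {M : Type*} [LeftCancelMonoid M] {S : Finset M}
    (hS : 1 ∉ S) {t : ℕ} (ht : 0 < t) (h : ℕ) (hcard : h + t ≤ S.card + 1) :
    ∃ l : List M, l.length = h ∧ l.Nodup ∧ (∀ x ∈ l, x ∈ S) ∧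
      PartialProdsDistinctWithin t l := by
  induction h with
  | zero => exact ⟨[], rfl, List.nodup_nil, by simp, .nil t⟩
  | succ n ih =>
    obtain ⟨l, rfl, hnodup, hlS, hl⟩ := ih (by omega)
    obtain ⟨y, hyS, hyl, hly⟩ := hl.exists_append_singleton hS ht (by omega)
    refine ⟨l ++ [y], List.length_append, ?_, ?_, hly⟩
    · exact List.concat_eq_append ▸ hnodup.concat hyl
    · simpa [or_imp, forall_and] using ⟨hlS, hyS⟩

theorem stmt4_general {M : Type*} [LeftCancelMonoid M] (S : Finset M) (hS : 1 ∉ S)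
    (h t : ℕ) (ht : 0 < t) (hcard : h + t ≤ S.card + 1) :
    ∃ l : List M, l.length = h ∧ l.Nodup ∧ (∀ x ∈ l, x ∈ S) ∧
      ∀ i j : ℕ, i < j → j ≤ min h (i + t) →
        (l.take i).prod ≠ (l.take j).prod := by
  obtain ⟨l, rfl, hl⟩ := exists_partialProdsDistinctWithin hS ht h hcard
  exact ⟨l, rfl, hl⟩

/-- Let `G` be a finite group, `S ⊆ G \ {0}` of size `k`, and `h, t`
positive integers with `h ≤ k - (t-1)`.  Then there are `h` distinct elements
`y_1, …, y_h` of `S` whose partial sums `s_i` satisfy `s_i ≠ s_j` whenever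
`0 ≤ i < j ≤ min(h, i+t)`. -/
theorem stmt4 {G : Type*} [Group G] [Finite G] (S : Finset G) (hS1 : (1 : G) ∉ S)
    (k h t : ℕ) (hk : S.card = k) (ht : 0 < t) (hh : 0 < h)
    (hhk : h + (t - 1) ≤ k) :
    ∃ l : List G, l.length = h ∧ l.Nodup ∧ (∀ x ∈ l, x ∈ S) ∧
      ∀ i j : ℕ, i < j → j ≤ min h (i + t) →
        (l.take i).prod ≠ (l.take j).prod := by
  exact stmt4_general S hS1 h t ht (by omega)
end

section
/- Let N be a finite group, let φ : Z_2 → Aut(N) be a group homomorphism, let G = N ⋊_φ Z_2, and let S ⊆ G \ {(0,0)} be a set of even size k and type (k/2, k/2). Let h and t be positive integers with k − h ≥ t + 2 and h ≥ t − 1. Then there exist h distinct elements y_1, …, y_h of S forming an alternating parity sequence such that, setting s_0 = (0,0) and s_i = y_1 + ⋯ + y_i, one has s_i ≠ s_j for all indices with 0 ≤ i < j ≤ min(h, i + t). -/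
/-!
Choose the `y_i` greedily, the parity of `y_i` being that of `i - 1`, so that the parity of `s_j` is
that of `⌊j / 2⌋`. After `n` choices the next element has a prescribed parity, at most `n / 2`
elements of that parity are used up, and the new sum can only collide with an `s_i` of its own
parity in the window `n + 1 - t ≤ i < n` (`i = n` is excluded as `y_{n+1}` is not the identity).
These `i` fill at most half of a window, because `i` and `i + 2` never collide together, and so a
choice is left over.
-/

open Finset

theorem ofAdd_natCast_eq_iff {m a b : ℕ} :
    Multiplicative.ofAdd (a : ZMod m) = Multiplicative.ofAdd (b : ZMod m) ↔ a ≡ b [MOD m] := by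
  rw [EmbeddingLike.apply_eq_iff_eq, ZMod.natCast_eq_natCast_iff]

theorem two_mul_card_le_of_mapsTo_sdiff {α : Type*} [DecidableEq α] {s u : Finset α} {f : α → α}
    (hsu : s ⊆ u) (hf : Set.MapsTo f s ↑(u \ s)) (hinj : Set.InjOn f s) : 2 * #s ≤ #u := by
  have hcard : #s ≤ #(u \ s) := card_le_card_of_injOn f hf hinj
  have hsdiff := card_sdiff_add_card_eq_card hsu
  omega

theorem two_mul_card_filter_modEq_two_le (n : ℕ) : 2 * #{i ∈ range n | i ≡ n [MOD 2]} ≤ n := by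
  suffices 2 * #{i ∈ range n | i ≡ n [MOD 2]} ≤ #(range n) by rwa [card_range] at this
  refine two_mul_card_le_of_mapsTo_sdiff (f := (· + 1)) (filter_subset _ _) (fun i hi ↦ ?_)
    (add_left_injective 1).injOn
  simp only [mem_coe, mem_sdiff, mem_filter, mem_range] at hi ⊢
  unfold Nat.ModEq at hi ⊢
  omega

/-- The indices `i < n` for which `s_{n+1}` is at distance at most `t` from `s_i` and has the same
parity as `s_i`; in an alternating sequence the parity of `s_j` is that of `j / 2`. The trivial
collision `i = n` is left out. -/
def conflictIndices (t n : ℕ) : Finset ℕ :=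
  {i ∈ Ico (n + 1 - t) n | i / 2 ≡ (n + 1) / 2 [MOD 2]}

theorem mem_conflictIndices {t n i : ℕ} :
    i ∈ conflictIndices t n ↔ (n + 1 ≤ i + t ∧ i < n) ∧ i / 2 ≡ (n + 1) / 2 [MOD 2] := by
  rw [conflictIndices, mem_filter, mem_Ico, tsub_le_iff_right]

theorem two_mul_card_conflictIndices_le (t n : ℕ) :
    2 * #(conflictIndices t n) ≤ 2 * ((n + 1) / 2) - (n + 1 - t) := by
  rw [← Nat.card_Ico]
  refine two_mul_card_le_of_mapsTo_sdiff (f := (· + 2)) (fun i hi ↦ ?_) (fun i hi ↦ ?_)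
    (add_left_injective 2).injOn
  all_goals
    simp only [mem_coe, mem_conflictIndices, mem_sdiff, mem_Ico, Nat.ModEq] at hi ⊢
    omega

theorem exists_mem_notMem_mul_notMem_s6 {M : Type*} [Mul M] [IsLeftCancelMul M] {A B C : Finset M}
    (p : M) (h : #B + #C < #A) : ∃ x ∈ A, x ∉ B ∧ p * x ∉ C := by
  classical
  have hlt : #C < #((A \ B).image (p * ·)) := by
    rw [card_image_of_injective _ (mul_right_injective p)]
    have := le_card_sdiff B A
    omega
  obtain ⟨_, hy, hyC⟩ := exists_mem_notMem_of_card_lt_card hlt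
  obtain ⟨x, hx, rfl⟩ := mem_image.1 hy
  exact ⟨x, (mem_sdiff.1 hx).1, (mem_sdiff.1 hx).2, hyC⟩

/-- `l` is an alternating parity sequence with respect to the parity map `π`, starting with an even
element. As lists are indexed from `0`, the parity of each entry is that of its index. -/
def IsAlternating {M : Type*} [Monoid M] (π : M →* Z2) (l : List M) : Prop :=
  ∀ (i : ℕ) (hi : i < l.length), π l[i] = Multiplicative.ofAdd (i : ZMod 2)

namespace IsAlternating

variable {M : Type*} [Monoid M] {π : M →* Z2} {l : List M}

theorem isChain_ne (hl : IsAlternating π l) : l.IsChain (fun a b ↦ π a ≠ π b) := by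
  refine List.isChain_iff_getElem.2 fun i hi ↦ ?_
  rw [hl, hl, Ne, ofAdd_natCast_eq_iff, Nat.ModEq]
  omega

theorem append_singleton (hl : IsAlternating π l) {x : M}
    (hx : π x = Multiplicative.ofAdd (l.length : ZMod 2)) : IsAlternating π (l ++ [x]) := by
  intro i hi
  rw [List.length_append, List.length_singleton] at hi
  rcases Nat.lt_succ_iff_lt_or_eq.1 hi with hlt | rfl
  · rw [List.getElem_append_left hlt, hl]
  · rwa [List.getElem_concat_length rfl]

theorem map_prod_take (hl : IsAlternating π l) {j : ℕ} (hj : j ≤ l.length) :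
    π (l.take j).prod = Multiplicative.ofAdd ((j / 2 : ℕ) : ZMod 2) := by
  induction j with
  | zero => simp
  | succ j ih =>
    have hmod : j / 2 + j ≡ (j + 1) / 2 [MOD 2] := by
      obtain ⟨c, rfl | rfl⟩ := j.even_or_odd' <;> rw [Nat.ModEq] <;> omega
    rw [List.prod_take_succ l j hj, map_mul, ih (by omega), hl, ← ofAdd_add, ← Nat.cast_add]
    exact ofAdd_natCast_eq_iff.2 hmod

theorem two_mul_card_filter_le [DecidableEq M] (hl : IsAlternating π l) :
    2 * #{g ∈ l.toFinset | π g = Multiplicative.ofAdd (l.length : ZMod 2)} ≤ l.length := by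
  have hsub : {g ∈ l.toFinset | π g = Multiplicative.ofAdd (l.length : ZMod 2)} ⊆
      {i ∈ range l.length | i ≡ l.length [MOD 2]}.image (l.getD · 1) := by
    intro g hg
    obtain ⟨hgl, hgπ⟩ := mem_filter.1 hg
    obtain ⟨i, hi, rfl⟩ := List.getElem_of_mem (List.mem_toFinset.1 hgl)
    rw [hl i hi, ofAdd_natCast_eq_iff] at hgπ
    exact mem_image.2 ⟨i, mem_filter.2 ⟨mem_range.2 hi, hgπ⟩, List.getD_eq_getElem _ _ hi⟩
  have hcard := (card_le_card hsub).trans card_image_le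
  have hindices := two_mul_card_filter_modEq_two_le l.length
  omega

end IsAlternating

theorem WeakSeqList.append_singleton {G : Type*} [Group G] {t : ℕ} {l : List G} {x : G}
    (hl : WeakSeqList t l)
    (hx : ∀ i ≤ l.length, l.length + 1 ≤ i + t → (l.take i).prod ≠ l.prod * x) :
    WeakSeqList t (l ++ [x]) := by
  intro i j hij hj hjt
  rw [List.length_append, List.length_singleton] at hj
  rw [List.take_append_of_le_length (by omega)]
  rcases Nat.le_add_one_iff.1 hj with hle | rfl
  · rw [List.take_append_of_le_length hle]
    exact hl i j hij hle hjt
  · rw [List.take_of_length_le (l := l ++ [x]) (by simp), List.prod_append, List.prod_singleton]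
    exact hx i (by omega) (by omega)

/-- The invariant of the greedy construction: `l` consists of distinct elements of `S`, alternates
in parity starting with an even element, and satisfies the `t`-weak partial-sums condition. -/
structure IsAlternatingWeakSeq {G : Type*} [Group G] (π : G →* Z2) (S : Finset G) (t : ℕ)
    (l : List G) : Prop where
  nodup : l.Nodup
  subset : ∀ x ∈ l, x ∈ S
  alternating : IsAlternating π l
  weakSeq : WeakSeqList t l

section Greedy

variable {G : Type*} [Group G] {π : G →* Z2} {S : Finset G} {t : ℕ} {l : List G}

theorem IsAlternatingWeakSeq.append_singleton (hl : IsAlternatingWeakSeq π S t l) {x : G}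
    (hxS : x ∈ S) (hx1 : x ≠ 1) (hxπ : π x = Multiplicative.ofAdd (l.length : ZMod 2))
    (hxl : x ∉ l)
    (hconflict : ∀ i ∈ conflictIndices t l.length, (l.take i).prod ≠ l.prod * x) :
    IsAlternatingWeakSeq π S t (l ++ [x]) := by
  have halt := hl.alternating.append_singleton hxπ
  refine ⟨?_, ?_, halt, hl.weakSeq.append_singleton fun i hi hit heq ↦ ?_⟩
  · rw [← List.concat_eq_append, List.nodup_concat]
    exact ⟨hxl, hl.nodup⟩
  · simpa only [List.forall_mem_append, List.forall_mem_singleton] using ⟨hl.subset, hxS⟩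
  · rcases hi.lt_or_eq with hlt | rfl
    · have hparity := halt.map_prod_take (j := l.length + 1) (by simp)
      rw [List.take_of_length_le (by simp), List.prod_append, List.prod_singleton, ← heq,
        hl.alternating.map_prod_take hi, ofAdd_natCast_eq_iff] at hparity
      exact hconflict i (mem_conflictIndices.2 ⟨⟨hit, hlt⟩, hparity⟩) heq
    · rw [List.take_length, left_eq_mul] at heq
      exact hx1 heq

theorem IsAlternatingWeakSeq.exists_append_singleton (hl : IsAlternatingWeakSeq π S t l)
    (hS1 : 1 ∉ S) (ht : 0 < t) (hS : ∀ c, l.length + t ≤ 2 * #{g ∈ S | π g = c}) :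
    ∃ x, IsAlternatingWeakSeq π S t (l ++ [x]) := by
  classical
  set c : Z2 := Multiplicative.ofAdd (l.length : ZMod 2)
  have hused : 2 * #{g ∈ l.toFinset | π g = c} ≤ l.length := hl.alternating.two_mul_card_filter_le
  have hconflict := two_mul_card_conflictIndices_le t l.length
  have hsums : #((conflictIndices t l.length).image fun i ↦ (l.take i).prod) ≤
      #(conflictIndices t l.length) := card_image_le
  have havailable := hS c
  obtain ⟨x, hx, hxused, hxsums⟩ := exists_mem_notMem_mul_notMem_s6
    (A := {g ∈ S | π g = c}) (B := {g ∈ l.toFinset | π g = c})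
    (C := (conflictIndices t l.length).image fun i ↦ (l.take i).prod) l.prod (by omega)
  obtain ⟨hxS, hxπ⟩ := mem_filter.1 hx
  refine ⟨x, hl.append_singleton hxS (ne_of_mem_of_not_mem hxS hS1) hxπ (fun hxl ↦ ?_)
    fun i hi heq ↦ hxsums (mem_image.2 ⟨i, hi, heq⟩)⟩
  exact hxused (mem_filter.2 ⟨List.mem_toFinset.2 hxl, hxπ⟩)

theorem exists_isAlternatingWeakSeq_length_eq {h : ℕ} (hS1 : 1 ∉ S) (ht : 0 < t)
    (hS : ∀ c, h + t ≤ 2 * #{g ∈ S | π g = c} + 1) :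
    ∃ l, IsAlternatingWeakSeq π S t l ∧ l.length = h := by
  induction h with
  | zero =>
    refine ⟨[], ⟨List.nodup_nil, by simp, fun i hi ↦ absurd hi (by simp), ?_⟩, rfl⟩
    exact fun i j hij hj ↦ absurd hij (by simp_all)
  | succ n ih =>
    obtain ⟨l, hl, rfl⟩ := ih fun c ↦ by have := hS c; omega
    obtain ⟨x, hx⟩ := hl.exists_append_singleton hS1 ht fun c ↦ by have := hS c; omega
    exact ⟨l ++ [x], hx, by simp⟩

end Greedy

theorem HasType.card_filter_right_eq {N : Type*} [Group N] {φ : Z2 →* MulAut N}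
    {S : Finset (N ⋊[φ] Z2)} {a : ℕ} (hS : HasType S a a) (c : Z2) :
    #{g ∈ S | g.right = c} = a := by
  obtain ⟨heven, hcard⟩ := hS
  by_cases hc : c = 1
  · rwa [hc]
  · have hodd : ∀ z : Z2, z = c ↔ z ≠ 1 := by decide +revert
    have hsplit := card_filter_add_card_filter_not (s := S) (fun g ↦ g.right = 1)
    rw [evenCount] at heven
    simp only [hodd, ne_eq]
    omega

theorem stmt6_general {G : Type*} [Group G] (π : G →* Z2) (S : Finset G) (hS1 : 1 ∉ S)
    (h t : ℕ) (ht : 0 < t) (hS : ∀ c, h + t ≤ 2 * #{g ∈ S | π g = c} + 1) :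
    ∃ l : List G, l.length = h ∧ l.Nodup ∧ (∀ x ∈ l, x ∈ S) ∧
      l.IsChain (fun a b ↦ π a ≠ π b) ∧
      ∀ i j : ℕ, i < j → j ≤ min h (i + t) → (l.take i).prod ≠ (l.take j).prod := by
  obtain ⟨l, hl, rfl⟩ := exists_isAlternatingWeakSeq_length_eq hS1 ht hS
  exact ⟨l, rfl, hl.nodup, hl.subset, hl.alternating.isChain_ne,
    fun i j hij hj ↦ hl.weakSeq i j hij (by omega) (by omega)⟩

/-- Let `N` be a finite group, `G = N ⋊_φ Z_2`, and `S ⊆ G \ {(0,0)}`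
of even size `k` and type `(k/2, k/2)`.  Let `h, t` be positive integers with
`k - h ≥ t + 2` and `h ≥ t - 1`.  Then there are `h` distinct elements of `S` forming
an alternating parity sequence whose partial sums `s_i` satisfy `s_i ≠ s_j` whenever
`0 ≤ i < j ≤ min(h, i+t)`. -/
theorem stmt6 {N : Type*} [Group N] [Finite N] (φ : Z2 →* MulAut N)
    (S : Finset (N ⋊[φ] Z2)) (hS1 : (1 : N ⋊[φ] Z2) ∉ S)
    (k h t : ℕ) (hk : S.card = k) (hke : Even k)
    (htype : HasType S (k / 2) (k / 2)) (ht : 0 < t) (hh : 0 < h)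
    (hhk : h + (t + 2) ≤ k) (hht : t - 1 ≤ h) :
    ∃ l : List (N ⋊[φ] Z2), l.length = h ∧ l.Nodup ∧ (∀ x ∈ l, x ∈ S) ∧ AltList l ∧
      ∀ i j : ℕ, i < j → j ≤ min h (i + t) →
        (l.take i).prod ≠ (l.take j).prod := by
  refine stmt6_general SemidirectProduct.rightHom S hS1 h t ht fun c ↦ ?_
  rw [SemidirectProduct.rightHom_eq_right, htype.card_filter_right_eq c]
  omega
end

section
/- Let N be a finite group, let φ : Z_2 → Aut(N) be a group homomorphism, and let G = N ⋊_φ Z_2. Then every balanced subset of G \ {(0,0)} of size k ≥ 4 admits an alternating parity 3-weak sequencing. -/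
/-!
In the alternating pattern odd, even, odd, even, …, a window of at most three consecutive elements
is a single even element `≠ 1`, an odd-even-odd triple, or contains exactly one odd element. In the
last case its product is odd, hence nontrivial, so only the triples `o, e, o'` need care. List the
odd elements arbitrarily and fill the gaps greedily: the gap between `o` and `o'` excludes the
single value `o⁻¹ * o'⁻¹`, and at that moment at least two even elements are left, because the last
even element ends the list and lies in no such gap.
-/

section Windows

variable {G : Type*} [Group G]

theorem weakSeqList_iff_forall_infix {t : ℕ} {l : List G} :
    WeakSeqList t l ↔ ∀ w, w <:+: l → w ≠ [] → w.length ≤ t → w.prod ≠ 1 := by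
  constructor
  · rintro h w ⟨u, v, rfl⟩ hw hwt hprod
    have hpos : 0 < w.length := List.length_pos_iff.mpr hw
    refine h u.length (u ++ w).length (by simpa using hpos) (by simp) (by simpa using hwt) ?_
    rw [List.take_left, List.append_assoc, List.take_left, List.prod_append, hprod, mul_one]
  · intro h i j hij hj hjt heq
    have hwindow : (l.take j).take i ++ (l.take j).drop i = l.take j := List.take_append_drop ..
    refine h ((l.take j).drop i)
      ((List.drop_suffix ..).isInfix.trans (List.take_prefix ..).isInfix) ?_ ?_ ?_
    · rw [Ne, List.drop_eq_nil_iff, List.length_take]; omega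
    · rw [List.length_drop, List.length_take]; omega
    · rwa [← hwindow, List.prod_append, List.take_take, min_eq_left hij.le, left_eq_mul] at heq

theorem weakSeqList_three_of_isChain (H : Subgroup G) {l : List G}
    (hchain : l.IsChain fun a b => a ∈ H ↔ b ∉ H) (hone : 1 ∉ l)
    (htriple : ∀ a b c, [a, b, c] <:+: l → a ∉ H → b ≠ a⁻¹ * c⁻¹) :
    WeakSeqList 3 l := by
  refine weakSeqList_iff_forall_infix.mpr fun w hw hne hlen hprod => ?_
  have hwchain := hchain.infix hw
  match w with
  | [a] => exact hone (hw.subset (by simpa using hprod.symm))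
  | [a, b] =>
    have hab : a ∈ H ↔ b ∉ H := by simpa using hwchain
    have hba : a⁻¹ = b := inv_eq_of_mul_eq_one_right (by simpa using hprod)
    rw [← hba, inv_mem_iff] at hab
    exact iff_not_self hab
  | [a, b, c] =>
    obtain ⟨hab, hbc⟩ : (a ∈ H ↔ b ∉ H) ∧ (b ∈ H ↔ c ∉ H) := by simpa using hwchain
    have hb : b = a⁻¹ * c⁻¹ :=
      eq_mul_inv_of_mul_eq (eq_inv_of_mul_eq_one_right (by simpa using hprod))
    by_cases ha : a ∈ H
    · have hc : c ∈ H := by tauto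
      exact hab.mp ha (hb ▸ mul_mem (inv_mem ha) (inv_mem hc))
    · exact htriple a b c hw ha hb

end Windows

section Interleaving

variable {α : Type*} {p : α → Prop}

theorem exists_isChain_cons_of_card_eq (f : α → α → α) {O : Multiset α} {E : Finset α} {o : α}
    (ho : ¬ p o) (hO : ∀ x ∈ O, ¬ p x) (hE : ∀ x ∈ E, p x) (hcard : E.card = O.card + 1) :
    ∃ l : List α, (l : Multiset α) = O + E.val ∧
      (o :: l).IsChain (fun a b => p a ↔ ¬ p b) ∧
      ∀ a b c, [a, b, c] <:+: o :: l → ¬ p a → b ≠ f a c := by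
  classical
  induction O using Multiset.induction generalizing o E with
  | empty =>
    obtain ⟨e, rfl⟩ : ∃ e, E = {e} := Finset.card_eq_one.mp hcard
    have he : p e := hE e (Finset.mem_singleton_self e)
    refine ⟨[e], by simp, by simp [ho, he], fun a b c habc => ?_⟩
    simpa using habc.length_le
  | cons o' O ih =>
    obtain ⟨ho', hO⟩ := Multiset.forall_mem_cons.mp hO
    rw [Multiset.card_cons] at hcard
    obtain ⟨e, heE, hef⟩ : ∃ e ∈ E, e ≠ f o o' := Finset.exists_mem_ne (by omega) _
    have he : p e := hE e heE
    obtain ⟨l, hl, hchain, htriple⟩ := ih (E := E.erase e) ho' hO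
      (fun x hx => hE x (Finset.mem_of_mem_erase hx))
      (by rw [Finset.card_erase_of_mem heE]; omega)
    refine ⟨e :: o' :: l, ?_, ?_, fun a b c habc ha => ?_⟩
    · calc ((e :: o' :: l : List α) : Multiset α)
          = e ::ₘ o' ::ₘ (O + (E.erase e).val) := by rw [← hl]; rfl
        _ = (o' ::ₘ O) + e ::ₘ E.val.erase e := by
          rw [Finset.erase_val, Multiset.add_cons, Multiset.cons_add]
        _ = (o' ::ₘ O) + E.val := by rw [Multiset.cons_erase heE]
    · exact .cons_cons (by simp [ho, he]) (.cons_cons (by simp [ho', he]) hchain)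
    · rcases List.infix_cons_iff.mp habc with hpre | htail
      · obtain ⟨rfl, rfl, rfl, -⟩ : a = o ∧ b = e ∧ c = o' ∧ [] <+: l := by
          simpa only [List.cons_prefix_cons] using hpre
        exact hef
      rcases List.infix_cons_iff.mp htail with hpre | htail
      · exact absurd ((List.cons_prefix_cons.mp hpre).1 ▸ he) ha
      · exact htriple a b c htail ha

theorem exists_isChain_of_card_filter_eq [DecidablePred p] (f : α → α → α) {S : Finset α}
    (hS : (S.filter p).card = (S.filter (¬ p ·)).card) :
    ∃ l : List α, (l : Multiset α) = S.val ∧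
      l.IsChain (fun a b => p a ↔ ¬ p b) ∧
      ∀ a b c, [a, b, c] <:+: l → ¬ p a → b ≠ f a c := by
  have hval : (S.filter p).val + (S.filter (¬ p ·)).val = S.val := Multiset.filter_add_not p S.val
  rcases (S.filter (¬ p ·)).val.empty_or_exists_mem with hodd | ⟨o, ho⟩
  · have heven : S.filter p = ∅ := by
      rw [← Finset.card_eq_zero, hS, Finset.card_def, hodd, Multiset.card_zero]
    refine ⟨[], ?_, .nil, fun a b c habc => ?_⟩
    · rw [← hval, hodd, heven]; rfl
    · simpa using habc.length_le
  · obtain ⟨O, hO⟩ := Multiset.exists_cons_of_mem ho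
    have hodd : ∀ x ∈ o ::ₘ O, ¬ p x := fun x hx => (Finset.mem_filter.mp (hO ▸ hx : x ∈ _)).2
    obtain ⟨ho, hodd⟩ := Multiset.forall_mem_cons.mp hodd
    obtain ⟨l, hl, hchain, htriple⟩ := exists_isChain_cons_of_card_eq f ho hodd
      (fun x hx => (Finset.mem_filter.mp hx).2)
      (by rw [hS, Finset.card_def, hO, Multiset.card_cons])
    refine ⟨o :: l, ?_, hchain, htriple⟩
    rw [← Multiset.cons_coe, hl, ← Multiset.cons_add, ← hO, add_comm, hval]

end Interleaving

theorem isOrderingOf_of_coe_eq_val {G : Type*} [Group G] {l : List G} {S : Finset G}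
    (h : (l : Multiset G) = S.val) : IsOrderingOf l S :=
  ⟨Multiset.coe_nodup.mp (h ▸ S.nodup), fun x => by rw [← Multiset.mem_coe, h, Finset.mem_val]⟩

theorem HasType.card_filter_ker_rightHom {N : Type*} [Group N] {φ : Z2 →* MulAut N}
    {S : Finset (N ⋊[φ] Z2)} {a b : ℕ} (h : HasType S a b) :
    (S.filter (· ∈ (SemidirectProduct.rightHom (φ := φ)).ker)).card = a ∧
      (S.filter (· ∉ (SemidirectProduct.rightHom (φ := φ)).ker)).card = b := by
  have hsplit := S.card_filter_add_card_filter_not (· ∈ (SemidirectProduct.rightHom (φ := φ)).ker)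
  have heven : (S.filter (· ∈ (SemidirectProduct.rightHom (φ := φ)).ker)).card = a := by
    simpa only [evenCount, MonoidHom.mem_ker, SemidirectProduct.rightHom_eq_right] using h.1
  exact ⟨heven, by have := h.2; omega⟩

theorem stmt7_general {G : Type*} [Group G] (H : Subgroup G) [DecidablePred (· ∈ H)]
    (S : Finset G) (hone : 1 ∉ S)
    (hbal : (S.filter (· ∈ H)).card = (S.filter (· ∉ H)).card) :
    ∃ l : List G, IsOrderingOf l S ∧ l.IsChain (fun a b => a ∈ H ↔ b ∉ H) ∧
      WeakSeqList 3 l := by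
  obtain ⟨l, hl, hchain, htriple⟩ :=
    exists_isChain_of_card_filter_eq (fun a c => a⁻¹ * c⁻¹) hbal
  have hord : IsOrderingOf l S := isOrderingOf_of_coe_eq_val hl
  exact ⟨l, hord, hchain,
    weakSeqList_three_of_isChain H hchain (mt (hord.2 1).mp hone) htriple⟩

/-- Let `N` be a finite group and `G = N ⋊_φ Z_2`.  Every balanced
subset of `G \ {(0,0)}` of size `k ≥ 4` admits an alternating parity `3`-weak
sequencing. -/
theorem stmt7 {N : Type*} [Group N] [Finite N] (φ : Z2 →* MulAut N)
    (S : Finset (N ⋊[φ] Z2)) (hS1 : (1 : N ⋊[φ] Z2) ∉ S)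
    (hke : Even S.card) (htype : HasType S (S.card / 2) (S.card / 2))
    (hk4 : 4 ≤ S.card) :
    ∃ l : List (N ⋊[φ] Z2), IsOrderingOf l S ∧ AltList l ∧ WeakSeqList 3 l := by
  obtain ⟨heven, hodd⟩ := htype.card_filter_ker_rightHom
  obtain ⟨l, hord, hchain, hweak⟩ := stmt7_general _ S hS1 (heven.trans hodd.symm)
  refine ⟨l, hord, hchain.imp fun a b hab hright => ?_, hweak⟩
  simp [MonoidHom.mem_ker, hright] at hab
end
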